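/- Let c₁, c₂, c₃, a, b be real numbers and H = c₁ X⊗X + c₂ Y⊗Y + c₃ Z⊗Z + a Z⊗I + b I⊗Z (a Heisenberg interaction with single-qubit Z terms). The eight-pulse sequence with pulses P₁ = X⊗I, P₂ = I⊗Y, P₃ = I⊗Y, P₄ = Y⊗X, P₅ = X⊗I, P₆ = Y⊗X, P₇ = I⊗Y, P₈ = I⊗Y applied at equally spaced times decouples H to first order: with toggling frames U₀ = I⊗I and U_l = P_l⋯P₁ for 1 ≤ l ≤ 7, one has ∑_{l=0}^{7} U_l H U_l† = 0. -/

import Mathlib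

/-!
Every term of `H` is a tensor product of Pauli matrices, and conjugating a Pauli matrix by a Pauli
matrix multiplies it by `±1`. Hence each pulse maps the family `heis c₁ c₂ c₃ a b` to itself and only
flips signs of the five coefficients (`conj_XI`, `conj_IY`, `conj_YX`). Since
`U_l H U_l† = P_l (U_{l-1} H U_{l-1}†) P_l†`, the eight toggled Hamiltonians are obtained by iterating
these sign changes, and each of the five coefficients occurs four times with each sign.
-/

open Matrix Kronecker NormedSpace

noncomputable section

/-- Pauli X matrix. -/
def PX : Matrix (Fin 2) (Fin 2) ℂ := !![0, 1; 1, 0]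
/-- Pauli Y matrix. -/
def PY : Matrix (Fin 2) (Fin 2) ℂ := !![0, -Complex.I; Complex.I, 0]
/-- Pauli Z matrix. -/
def PZ : Matrix (Fin 2) (Fin 2) ℂ := !![1, 0; 0, -1]
/-- 2×2 identity matrix. -/
def PI : Matrix (Fin 2) (Fin 2) ℂ := 1

/-- Two-qubit operators: 4×4 matrices indexed by `Fin 2 × Fin 2`. -/
abbrev Mat4 := Matrix (Fin 2 × Fin 2) (Fin 2 × Fin 2) ℂ

/-- The Heisenberg interaction with single-qubit `Z` terms, as a function of its coefficients. The
coefficients are complex so that sign changes need no casts. -/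
def heis (c₁ c₂ c₃ a b : ℂ) : Mat4 :=
  c₁ • (PX ⊗ₖ PX) + c₂ • (PY ⊗ₖ PY) + c₃ • (PZ ⊗ₖ PZ) + a • (PZ ⊗ₖ PI) + b • (PI ⊗ₖ PZ)

lemma conjTranspose_PX : PXᴴ = PX := by
  ext i j; fin_cases i <;> fin_cases j <;> simp [PX]

lemma conjTranspose_PY : PYᴴ = PY := by
  ext i j; fin_cases i <;> fin_cases j <;> simp [PY]

lemma conj_X_X : PX * PX * PXᴴ = PX := by
  rw [conjTranspose_PX]; ext i j; fin_cases i <;> fin_cases j <;> simp [PX]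

lemma conj_X_Y : PX * PY * PXᴴ = -PY := by
  rw [conjTranspose_PX]; ext i j; fin_cases i <;> fin_cases j <;> simp [PX, PY]

lemma conj_X_Z : PX * PZ * PXᴴ = -PZ := by
  rw [conjTranspose_PX]; ext i j; fin_cases i <;> fin_cases j <;> simp [PX, PZ]

lemma conj_X_I : PX * PI * PXᴴ = PI := by
  rw [conjTranspose_PX]; ext i j; fin_cases i <;> fin_cases j <;> simp [PX, PI]

lemma conj_Y_X : PY * PX * PYᴴ = -PX := by
  rw [conjTranspose_PY]; ext i j; fin_cases i <;> fin_cases j <;> simp [PY, PX]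

lemma conj_Y_Y : PY * PY * PYᴴ = PY := by
  rw [conjTranspose_PY]; ext i j; fin_cases i <;> fin_cases j <;> simp [PY]

lemma conj_Y_Z : PY * PZ * PYᴴ = -PZ := by
  rw [conjTranspose_PY]; ext i j; fin_cases i <;> fin_cases j <;> simp [PY, PZ]

lemma conj_Y_I : PY * PI * PYᴴ = PI := by
  rw [conjTranspose_PY]; ext i j; fin_cases i <;> fin_cases j <;> simp [PY, PI]

lemma conj_I_X : PI * PX * PIᴴ = PX := by
  simp [PI]

lemma conj_I_Y : PI * PY * PIᴴ = PY := by
  simp [PI]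

lemma conj_I_Z : PI * PZ * PIᴴ = PZ := by
  simp [PI]

lemma conj_I_I : PI * PI * PIᴴ = PI := by
  simp [PI]

lemma conj_kron (A B C D : Matrix (Fin 2) (Fin 2) ℂ) :
    (A ⊗ₖ B) * (C ⊗ₖ D) * (A ⊗ₖ B)ᴴ = (A * C * Aᴴ) ⊗ₖ (B * D * Bᴴ) := by
  rw [conjTranspose_kronecker, ← mul_kronecker_mul, ← mul_kronecker_mul]

lemma neg_kron (A B : Matrix (Fin 2) (Fin 2) ℂ) : (-A) ⊗ₖ B = -(A ⊗ₖ B) := by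
  ext i j; simp

lemma kron_neg (A B : Matrix (Fin 2) (Fin 2) ℂ) : A ⊗ₖ (-B) = -(A ⊗ₖ B) := by
  ext i j; simp

lemma conj_XI (c₁ c₂ c₃ a b : ℂ) :
    (PX ⊗ₖ PI) * heis c₁ c₂ c₃ a b * (PX ⊗ₖ PI)ᴴ = heis c₁ (-c₂) (-c₃) (-a) b := by
  simp only [heis, mul_add, add_mul, mul_smul_comm, smul_mul_assoc, conj_kron]
  simp only [conj_I_X, conj_I_Y, conj_I_Z, conj_I_I, conj_X_X, conj_X_Y, conj_X_Z, conj_X_I,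
    neg_kron, smul_neg, neg_smul]

lemma conj_IY (c₁ c₂ c₃ a b : ℂ) :
    (PI ⊗ₖ PY) * heis c₁ c₂ c₃ a b * (PI ⊗ₖ PY)ᴴ = heis (-c₁) c₂ (-c₃) a (-b) := by
  simp only [heis, mul_add, add_mul, mul_smul_comm, smul_mul_assoc, conj_kron]
  simp only [conj_I_X, conj_I_Y, conj_I_Z, conj_I_I, conj_Y_X, conj_Y_Y, conj_Y_Z, conj_Y_I,
    kron_neg, smul_neg, neg_smul]

lemma conj_YX (c₁ c₂ c₃ a b : ℂ) :
    (PY ⊗ₖ PX) * heis c₁ c₂ c₃ a b * (PY ⊗ₖ PX)ᴴ = heis (-c₁) (-c₂) c₃ (-a) (-b) := by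
  simp only [heis, mul_add, add_mul, mul_smul_comm, smul_mul_assoc, conj_kron]
  simp only [conj_X_X, conj_X_Y, conj_X_Z, conj_X_I, conj_Y_X, conj_Y_Y, conj_Y_Z, conj_Y_I,
    neg_kron, kron_neg, neg_neg, smul_neg, neg_smul]

/-- Passing from one toggling frame to the next conjugates the toggled Hamiltonian by the pulse. -/
lemma conj_toggle (P U H : Mat4) : (P * U) * H * (P * U)ᴴ = P * (U * H * Uᴴ) * Pᴴ := by
  simp only [conjTranspose_mul, Matrix.mul_assoc]

/-- The eight-pulse sequence (πₓI, Iπ_y, Iπ_y, π_yπₓ, πₓI, π_yπₓ, Iπ_y, Iπ_y) decouples the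
Heisenberg interaction with single-qubit Z terms to first order. -/
theorem eight_pulse_decouples_heisenberg_with_Z
    (c₁ c₂ c₃ a b : ℝ) (H : Mat4)
    (hH : H = (c₁ : ℂ) • (PX ⊗ₖ PX) + (c₂ : ℂ) • (PY ⊗ₖ PY) + (c₃ : ℂ) • (PZ ⊗ₖ PZ)
          + (a : ℂ) • (PZ ⊗ₖ PI) + (b : ℂ) • (PI ⊗ₖ PZ))
    (P₁ P₂ P₃ P₄ P₅ P₆ P₇ P₈ U₀ U₁ U₂ U₃ U₄ U₅ U₆ U₇ : Mat4)
    (hP₁ : P₁ = PX ⊗ₖ PI) (hP₂ : P₂ = PI ⊗ₖ PY) (hP₃ : P₃ = PI ⊗ₖ PY) (hP₄ : P₄ = PY ⊗ₖ PX)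
    (hP₅ : P₅ = PX ⊗ₖ PI) (hP₆ : P₆ = PY ⊗ₖ PX) (hP₇ : P₇ = PI ⊗ₖ PY) (hP₈ : P₈ = PI ⊗ₖ PY)
    (hU₀ : U₀ = PI ⊗ₖ PI) (hU₁ : U₁ = P₁) (hU₂ : U₂ = P₂ * P₁) (hU₃ : U₃ = P₃ * P₂ * P₁)
    (hU₄ : U₄ = P₄ * P₃ * P₂ * P₁) (hU₅ : U₅ = P₅ * P₄ * P₃ * P₂ * P₁)
    (hU₆ : U₆ = P₆ * P₅ * P₄ * P₃ * P₂ * P₁) (hU₇ : U₇ = P₇ * P₆ * P₅ * P₄ * P₃ * P₂ * P₁) :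
    U₀ * H * U₀ᴴ + U₁ * H * U₁ᴴ + U₂ * H * U₂ᴴ + U₃ * H * U₃ᴴ
      + U₄ * H * U₄ᴴ + U₅ * H * U₅ᴴ + U₆ * H * U₆ᴴ + U₇ * H * U₇ᴴ = 0 := by
  have hH' : H = heis c₁ c₂ c₃ a b := hH
  have h₀ : U₀ * H * U₀ᴴ = heis c₁ c₂ c₃ a b := by
    simp [hU₀, PI, hH']
  have h₁ : U₁ * H * U₁ᴴ = heis c₁ (-c₂) (-c₃) (-a) b := by
    rw [hU₁, hP₁, hH', conj_XI]
  have h₂ : U₂ * H * U₂ᴴ = heis (-c₁) (-c₂) c₃ (-a) (-b) := by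
    have hU : U₂ = P₂ * U₁ := by simp only [hU₂, hU₁]
    rw [hU, conj_toggle, h₁, hP₂, conj_IY]
    simp only [neg_neg]
  have h₃ : U₃ * H * U₃ᴴ = heis c₁ (-c₂) (-c₃) (-a) b := by
    have hU : U₃ = P₃ * U₂ := by simp only [hU₃, hU₂, Matrix.mul_assoc]
    rw [hU, conj_toggle, h₂, hP₃, conj_IY]
    simp only [neg_neg]
  have h₄ : U₄ * H * U₄ᴴ = heis (-c₁) c₂ (-c₃) a (-b) := by
    have hU : U₄ = P₄ * U₃ := by simp only [hU₄, hU₃, Matrix.mul_assoc]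
    rw [hU, conj_toggle, h₃, hP₄, conj_YX]
    simp only [neg_neg]
  have h₅ : U₅ * H * U₅ᴴ = heis (-c₁) (-c₂) c₃ (-a) (-b) := by
    have hU : U₅ = P₅ * U₄ := by simp only [hU₅, hU₄, Matrix.mul_assoc]
    rw [hU, conj_toggle, h₄, hP₅, conj_XI]
    simp only [neg_neg]
  have h₆ : U₆ * H * U₆ᴴ = heis c₁ c₂ c₃ a b := by
    have hU : U₆ = P₆ * U₅ := by simp only [hU₆, hU₅, Matrix.mul_assoc]
    rw [hU, conj_toggle, h₅, hP₆, conj_YX]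
    simp only [neg_neg]
  have h₇ : U₇ * H * U₇ᴴ = heis (-c₁) c₂ (-c₃) a (-b) := by
    have hU : U₇ = P₇ * U₆ := by simp only [hU₇, hU₆, Matrix.mul_assoc]
    rw [hU, conj_toggle, h₆, hP₇, conj_IY]
  rw [h₀, h₁, h₂, h₃, h₄, h₅, h₆, h₇]
  simp only [heis, neg_smul]
  abel
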